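/- For every n ≥ 1 there exist points x₁,…,x_n ∈ ℝ^d such that the equal-weight Gaussian mixture q_n = (1/n) Σ_{i=1}^n k_ε(· − x_i) satisfies, for every measurable function f : ℝ^d → ℝ with |f(x)| ≤ 1 for all x, the integral approximation bound |∫ f(x) q_n(x) dx − ∫ f(x) μ*(x) dx| ≤ √(2 C² (log n + 1)/n). -/

import Mathlib

/-!
The proof is a derandomized second-moment argument in the weighted space `L²(dx / μ*)`.

For centres `x₁, …, x_n` put `S(x) = ∑ᵢ (k_ε(x - xᵢ) - μ*(x))`. If a new centre `w` is drawn from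
`P`, the increment `g_w(x) = k_ε(x - w) - μ*(x)` has mean zero at every `x`, so the cross term in
`∫ (S + g_w)² / μ*` vanishes on average and the mean of `∫ g_w² / μ*` is at most `C²`. Hence some
`w` raises `∫ S² / μ*` by at most `C²` (`exists_step`), and by induction there are `n` centres with
`∫ S² / μ* ≤ n C²` (`exists_points`). As `μ*` has mass one, Cauchy-Schwarz
(`sq_integral_abs_le`) gives `∫ |S| ≤ √(n C²)`. Dividing by `n`, the `L¹` error is at
most `√(C² / n)`, which is stronger than the stated bound because `2 (log n + 1) ≥ 1`.
-/

open MeasureTheory Real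

noncomputable def kG (d : ℕ) (ε : ℝ) (x : EuclideanSpace ℝ (Fin d)) : ℝ :=
  (2 * π * ε ^ 2) ^ (-(d : ℝ) / 2) * Real.exp (-‖x‖ ^ 2 / (2 * ε ^ 2))

section Abstract

variable {X W : Type*} [MeasurableSpace X] [MeasurableSpace W]

/-- One greedy step: some `w`, for which the new weighted square norm is finite, increases it by
at most the average of `∫ k(·, w)² / m`. -/
lemma exists_step (ν : Measure X) [SFinite ν] (P : Measure W) [IsProbabilityMeasure P]
    (k : X → W → ℝ) (hk : Measurable (Function.uncurry k))
    (m : X → ℝ) (hm : Measurable m) (hmi : Integrable m ν) (hmpos : ∀ x, 0 < m x)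
    (hkP : ∀ x, Integrable (k x) P) (hk2P : ∀ x, Integrable (fun w => k x w ^ 2) P)
    (hmk : ∀ x, m x = ∫ w, k x w ∂P)
    (hk2 : Integrable (fun p : X × W => k p.1 p.2 ^ 2 / m p.1) (ν.prod P))
    (S : X → ℝ) (hS : Measurable S) (hS2 : Integrable (fun x => S x ^ 2 / m x) ν) :
    ∃ w, Integrable (fun x => (S x + (k x w - m x)) ^ 2 / m x) ν ∧
      ∫ x, (S x + (k x w - m x)) ^ 2 / m x ∂ν ≤
        ∫ x, S x ^ 2 / m x ∂ν + ∫ x, (∫ w, k x w ^ 2 ∂P) / m x ∂ν := by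
  have hk' : Measurable (fun p : X × W => k p.1 p.2) := hk
  have hm' : Measurable (fun p : X × W => m p.1) := hm.comp measurable_fst
  have hS' : Measurable (fun p : X × W => S p.1) := hS.comp measurable_fst
  have i0 : Integrable (fun p : X × W => m p.1) (ν.prod P) := hmi.comp_fst P
  have i1 : Integrable (fun p : X × W => S p.1 ^ 2 / m p.1) (ν.prod P) := hS2.comp_fst P
  have i3 : Integrable (fun p : X × W => (S p.1 + (k p.1 p.2 - m p.1)) ^ 2 / m p.1)
      (ν.prod P) := by
    refine (((i1.add hk2).add i0).const_mul 3).mono'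
      (((hS'.add (hk'.sub hm')).pow_const 2).div hm').aestronglyMeasurable (Filter.Eventually.of_forall fun p => ?_)
    have := hmpos p.1
    rw [Real.norm_of_nonneg (by positivity)]
    simp only [Pi.add_apply]
    have h : 3 * (S p.1 ^ 2 / m p.1 + k p.1 p.2 ^ 2 / m p.1 + m p.1)
        = (3 * (S p.1 ^ 2 + k p.1 p.2 ^ 2 + m p.1 ^ 2)) / m p.1 := by
      field_simp
    rw [h]
    gcongr
    nlinarith [sq_nonneg (S p.1 - k p.1 p.2), sq_nonneg (S p.1 + m p.1),
      sq_nonneg (k p.1 p.2 + m p.1)]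
  -- the mean over `w`, at fixed `x`: the cross term drops out
  have inner : ∀ x, ∫ w, (S x + (k x w - m x)) ^ 2 / m x ∂P
      = S x ^ 2 / m x + (∫ w, k x w ^ 2 ∂P) / m x - m x := by
    intro x
    have hx := (hmpos x).ne'
    have e : ∀ w, (S x + (k x w - m x)) ^ 2 / m x
        = (k x w ^ 2 / m x + (2 * (S x - m x) / m x) * k x w) + (S x - m x) ^ 2 / m x := by
      intro w; field_simp; ring
    simp_rw [e]
    have j1 : Integrable (fun w => k x w ^ 2 / m x) P := (hk2P x).div_const _
    have j2 : Integrable (fun w => 2 * (S x - m x) / m x * k x w) P := (hkP x).const_mul _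
    have j3 : Integrable (fun w => k x w ^ 2 / m x + 2 * (S x - m x) / m x * k x w) P := j1.add j2
    rw [integral_add j3 (integrable_const _), integral_add j1 j2, integral_div,
      integral_const_mul, ← hmk x]
    simp only [integral_const, probReal_univ, smul_eq_mul, one_mul]
    field_simp; ring
  have i4 : Integrable (fun x => (∫ w, k x w ^ 2 ∂P) / m x) ν := by
    have := hk2.integral_prod_left
    simpa only [integral_div] using this
  have i5 := i3.integral_prod_right
  obtain ⟨w, hw, hle⟩ := exists_notMem_null_le_integral i5 (ae_iff.1 i3.prod_left_ae)
  refine ⟨w, by simpa using hw, hle.trans ?_⟩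
  rw [← integral_prod_symm _ i3, integral_prod _ i3]
  simp only [inner]
  have i6 : Integrable (fun x => S x ^ 2 / m x + (∫ w, k x w ^ 2 ∂P) / m x) ν := hS2.add i4
  rw [integral_sub i6 hmi, integral_add hS2 i4]
  linarith [integral_nonneg (μ := ν) (f := m) (fun x => (hmpos x).le)]

lemma exists_points (ν : Measure X) [SFinite ν] (P : Measure W) [IsProbabilityMeasure P]
    (k : X → W → ℝ) (hk : Measurable (Function.uncurry k))
    (m : X → ℝ) (hm : Measurable m) (hmi : Integrable m ν) (hmpos : ∀ x, 0 < m x)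
    (hkP : ∀ x, Integrable (k x) P) (hk2P : ∀ x, Integrable (fun w => k x w ^ 2) P)
    (hmk : ∀ x, m x = ∫ w, k x w ∂P)
    (hk2 : Integrable (fun p : X × W => k p.1 p.2 ^ 2 / m p.1) (ν.prod P)) (n : ℕ) :
    ∃ xs : Fin n → W, Integrable (fun x => (∑ i, (k x (xs i) - m x)) ^ 2 / m x) ν ∧
      ∫ x, (∑ i, (k x (xs i) - m x)) ^ 2 / m x ∂ν ≤
        n * ∫ x, (∫ w, k x w ^ 2 ∂P) / m x ∂ν := by
  induction n with
  | zero => exact ⟨Fin.elim0, by simp, by simp⟩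
  | succ n ih =>
    obtain ⟨xs, h1, h2⟩ := ih
    have hkw : ∀ w, Measurable (fun x => k x w) := fun w => hk.of_uncurry_right
    obtain ⟨w, h3, h4⟩ := exists_step ν P k hk m hm hmi hmpos hkP hk2P hmk hk2
      (fun x => ∑ i, (k x (xs i) - m x))
      (Finset.measurable_sum _ fun i _ => (hkw _).sub hm) h1
    refine ⟨Fin.snoc xs w, ?_, ?_⟩
    · simpa only [Fin.sum_univ_castSucc, Fin.snoc_castSucc, Fin.snoc_last] using h3
    · simp only [Fin.sum_univ_castSucc, Fin.snoc_castSucc, Fin.snoc_last]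
      push_cast
      linarith

/-- Cauchy-Schwarz against a probability density `m`. -/
lemma sq_integral_abs_le (ν : Measure X) (m S : X → ℝ) (hmi : Integrable m ν)
    (hmpos : ∀ x, 0 < m x) (hm1 : ∫ x, m x ∂ν = 1) (hSi : Integrable S ν)
    (hS2 : Integrable (fun x => S x ^ 2 / m x) ν) :
    (∫ x, |S x| ∂ν) ^ 2 ≤ ∫ x, S x ^ 2 / m x ∂ν := by
  set B := ∫ x, |S x| ∂ν with hB
  -- integrate `(|S| - B m)² / m ≥ 0`
  have h : 0 ≤ ∫ x, (S x ^ 2 / m x - 2 * B * |S x| + B ^ 2 * m x) ∂ν := by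
    refine integral_nonneg fun x => ?_
    have hx := hmpos x
    have : S x ^ 2 / m x - 2 * B * |S x| + B ^ 2 * m x = (|S x| - B * m x) ^ 2 / m x := by
      rw [← sq_abs (S x)]; field_simp; ring
    simp only [Pi.zero_apply]
    rw [this]; positivity
  have i : Integrable (fun x => S x ^ 2 / m x - 2 * B * |S x|) ν :=
    hS2.sub (hSi.abs.const_mul _)
  rw [integral_add i (hmi.const_mul _),
    integral_sub hS2 (hSi.abs.const_mul _), integral_const_mul, integral_const_mul, hm1,
    ← hB] at h
  linarith

end Abstract

lemma continuous_kG (d : ℕ) (ε : ℝ) : Continuous (kG d ε) := by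
  unfold kG; fun_prop

lemma kG_pos (d : ℕ) {ε : ℝ} (hε : 0 < ε) (x : EuclideanSpace ℝ (Fin d)) : 0 < kG d ε x := by
  unfold kG; positivity

lemma kG_le (d : ℕ) {ε : ℝ} (hε : 0 < ε) (x : EuclideanSpace ℝ (Fin d)) :
    kG d ε x ≤ (2 * π * ε ^ 2) ^ (-(d : ℝ) / 2) := by
  unfold kG
  refine mul_le_of_le_one_right (by positivity) (Real.exp_le_one_iff.2 ?_)
  rw [neg_div]
  exact neg_nonpos.2 (by positivity)

lemma integral_kG (d : ℕ) {ε : ℝ} (hε : 0 < ε) : ∫ x, kG d ε x = 1 := by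
  unfold kG
  rw [integral_const_mul]
  have h := GaussianFourier.integral_rexp_neg_mul_sq_norm (V := EuclideanSpace ℝ (Fin d))
    (b := 1 / (2 * ε ^ 2)) (by positivity)
  have e : ∀ v : EuclideanSpace ℝ (Fin d),
      -‖v‖ ^ 2 / (2 * ε ^ 2) = -(1 / (2 * ε ^ 2)) * ‖v‖ ^ 2 := fun v => by ring
  simp_rw [e]
  rw [h, finrank_euclideanSpace_fin, show π / (1 / (2 * ε ^ 2)) = 2 * π * ε ^ 2 by field_simp,
    ← Real.rpow_add (by positivity), neg_div, neg_add_cancel, Real.rpow_zero]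

lemma integrable_kG (d : ℕ) {ε : ℝ} (hε : 0 < ε) : Integrable (kG d ε) :=
  .of_integral_ne_zero (by rw [integral_kG d hε]; exact one_ne_zero)

/-- there is an equal-weight `n`-component Gaussian mixture `q_n` such that
for every measurable `f` with `|f| ≤ 1`, the integral approximation error between `q_n`
and the target `μ*` is at most `√(2 C² (log n + 1) / n)`. -/
theorem stmt_1 (d : ℕ) (hd : 1 ≤ d) (ε : ℝ) (hε : 0 < ε)
    (P : Measure (EuclideanSpace ℝ (Fin d))) [IsProbabilityMeasure P]
    (μstar : EuclideanSpace ℝ (Fin d) → ℝ)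
    (hμstar : ∀ x, μstar x = ∫ w, kG d ε (x - w) ∂P)
    (hpos : ∀ x, 0 < μstar x)
    (C2 : ℝ)
    (hC2 : C2 = ∫ x, (∫ m, (kG d ε (x - m)) ^ 2 ∂P) / μstar x)
    (hC2fin : Integrable (fun x => (∫ m, (kG d ε (x - m)) ^ 2 ∂P) / μstar x))
    (n : ℕ) (hn : 1 ≤ n) :
    ∃ xs : Fin n → EuclideanSpace ℝ (Fin d),
      ∀ f : EuclideanSpace ℝ (Fin d) → ℝ, Measurable f → (∀ x, |f x| ≤ 1) →
        |(∫ x, f x * ((1 / n : ℝ) * ∑ i, kG d ε (x - xs i))) - ∫ x, f x * μstar x| ≤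
          Real.sqrt (2 * C2 * (Real.log n + 1) / n) := by
  have hc := continuous_kG d ε
  have hk : Measurable (Function.uncurry fun x w : EuclideanSpace ℝ (Fin d) => kG d ε (x - w)) :=
    (hc.comp (continuous_fst.sub continuous_snd)).measurable
  have hm : Measurable μstar := by
    rw [funext hμstar]
    exact hk.stronglyMeasurable.integral_prod_right.measurable
  have hkP : ∀ x, Integrable (fun w => kG d ε (x - w)) P := fun x =>
    Integrable.of_bound (by fun_prop) ((2 * π * ε ^ 2) ^ (-(d : ℝ) / 2))
      (.of_forall fun w => by rw [Real.norm_of_nonneg (kG_pos d hε _).le]; exact kG_le d hε _)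
  have hk2P : ∀ x, Integrable (fun w => kG d ε (x - w) ^ 2) P := fun x =>
    Integrable.of_bound (by fun_prop) (((2 * π * ε ^ 2) ^ (-(d : ℝ) / 2)) ^ 2)
      (.of_forall fun w => by
        rw [Real.norm_of_nonneg (sq_nonneg _)]
        exact pow_le_pow_left₀ (kG_pos d hε _).le (kG_le d hε _) 2)
  have hkk : Integrable (fun p : EuclideanSpace ℝ (Fin d) × EuclideanSpace ℝ (Fin d) =>
      kG d ε (p.1 - p.2)) (volume.prod P) := by
    refine (integrable_prod_iff' hk.aestronglyMeasurable).2
      ⟨.of_forall fun w => (integrable_kG d hε).comp_sub_right w, ?_⟩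
    simp only [Function.uncurry, Real.norm_of_nonneg (kG_pos d hε _).le]
    simp_rw [fun w => integral_sub_right_eq_self (μ := volume) (kG d ε) w]
    exact integrable_const _
  have hmi : Integrable μstar := by
    rw [funext hμstar]
    exact hkk.integral_prod_left
  have hm1 : ∫ x, μstar x = 1 := by
    simp_rw [hμstar]
    rw [integral_integral_swap hkk]
    simp_rw [fun w => integral_sub_right_eq_self (μ := volume) (kG d ε) w]
    simp [integral_kG d hε]
  have hk2 : Integrable (fun p : EuclideanSpace ℝ (Fin d) × EuclideanSpace ℝ (Fin d) =>
      kG d ε (p.1 - p.2) ^ 2 / μstar p.1) (volume.prod P) := by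
    refine (integrable_prod_iff ?_).2 ⟨.of_forall fun x => (hk2P x).div_const (μstar x), ?_⟩
    · exact ((hk.pow_const 2).div (hm.comp measurable_fst)).aestronglyMeasurable
    · have e : ∀ x w, ‖kG d ε (x - w) ^ 2 / μstar x‖ = kG d ε (x - w) ^ 2 / μstar x :=
        fun x w => Real.norm_of_nonneg (div_nonneg (sq_nonneg _) (hpos x).le)
      simpa only [e, integral_div] using hC2fin
  obtain ⟨xs, hi, hle⟩ := exists_points volume P (fun x w => kG d ε (x - w)) hk μstar hm hmi
    hpos hkP hk2P hμstar hk2 n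
  refine ⟨xs, fun f hf hf1 => ?_⟩
  rw [← hC2] at hle
  have hC0 : 0 ≤ C2 := hC2 ▸ integral_nonneg fun x =>
    div_nonneg (integral_nonneg fun _ => sq_nonneg _) (hpos x).le
  have hn0 : (0 : ℝ) < n := by exact_mod_cast hn
  set S := fun x => ∑ i, (kG d ε (x - xs i) - μstar x) with hSdef
  have hki : ∀ i, Integrable (fun x => kG d ε (x - xs i)) :=
    fun i => (integrable_kG d hε).comp_sub_right _
  have hSi : Integrable S := integrable_finsetSum _ fun i _ => (hki i).sub hmi
  have hCS := (sq_integral_abs_le volume μstar S hmi hpos hm1 hSi hi).trans hle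
  have bdd : ∀ᵐ x, ‖f x‖ ≤ 1 := .of_forall hf1
  have hqi : Integrable (fun x => (1 / n : ℝ) * ∑ i, kG d ε (x - xs i)) :=
    (integrable_finsetSum _ fun i _ => hki i).const_mul _
  have key : (∫ x, f x * ((1 / n : ℝ) * ∑ i, kG d ε (x - xs i))) - ∫ x, f x * μstar x
      = (1 / n : ℝ) * ∫ x, f x * S x := by
    rw [← integral_sub (hqi.bdd_mul hf.aestronglyMeasurable bdd)
      (hmi.bdd_mul hf.aestronglyMeasurable bdd), ← integral_const_mul]
    congr 1; ext x
    simp only [hSdef, Finset.sum_sub_distrib, Finset.sum_const, Finset.card_univ,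
      Fintype.card_fin, nsmul_eq_mul]
    field_simp
  have hfS : |∫ x, f x * S x| ≤ ∫ x, |S x| := by
    rw [← Real.norm_eq_abs]
    refine norm_integral_le_of_norm_le hSi.abs (.of_forall fun x => ?_)
    rw [norm_mul]
    exact mul_le_of_le_one_left (abs_nonneg _) (hf1 x)
  have hlog : 0 ≤ Real.log n := Real.log_nonneg (by exact_mod_cast hn)
  rw [key]
  apply Real.abs_le_sqrt
  calc ((1 / n : ℝ) * ∫ x, f x * S x) ^ 2 = (1 / n : ℝ) ^ 2 * |∫ x, f x * S x| ^ 2 := by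
        rw [sq_abs]; ring
    _ ≤ (1 / n : ℝ) ^ 2 * (n * C2) := by
        gcongr
        exact (pow_le_pow_left₀ (abs_nonneg _) hfS 2).trans hCS
    _ = C2 / n := by field_simp
    _ ≤ 2 * C2 * (Real.log n + 1) / n := by
        gcongr
        nlinarith [mul_nonneg hC0 hlog]
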